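/- Let n ≥ m > 2 be integers. For every ε > 0 there exists a constant C = C(m, n, ε) such that for all real H ≥ 2 the number of m×n matrices with all entries in E(H) and of rank exactly 2 is at most C·H^{7+ε} if (m,n) = (3,3), and at most C·H^{2n+m−3+ε} if (m,n) ≠ (3,3). -/

import Mathlib

/-- The set of Egyptian (unit) fractions `1/a` with `a` a nonzero integer, `|a| ≤ H`. -/
def Egyptian (H : ℝ) : Set ℚ := {x : ℚ | ∃ a : ℤ, a ≠ 0 ∧ (|a| : ℝ) ≤ H ∧ x = 1 / (a : ℚ)}

/-!
A matrix of rank two with nonzero entries has a nonvanishing `2 × 2` minor, in rows `r, s` and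
columns `p, q`. If some third row is independent of both rows `r, s` on the columns `p, q`, and some
third column of both columns `p, q` on the rows `r, s`, these three rows and three columns form a
generic frame: every further row, restricted to the three columns, solves a linear equation
`x a + y b + z c = 0` with nonzero coefficients, and likewise every further column. For unit
fractions and fixed `x` this equation says that two integers have a prescribed product, so the
divisor bound leaves only `O(H ^ (1 + δ))` solutions.

Otherwise all rows (or all columns) lie on two lines, two of them on the same line. A pair of
proportional rows satisfies `u c * v d = u d * v c`, hence is counted by the multiplicative energy
of the unit fractions, which is `O(H ^ (2 + δ))`, again by the divisor bound. This degenerate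
configuration gives the exponent `2 * n + m - 3`; the generic one gives `m + n + 1`, which is larger
only for `m = n = 3`.
-/

section DivisorBound

open Asymptotics Filter Finset

theorem natCast_add_one_le_mul_pow {y : ℝ} (hy : 1 < y) (e : ℕ) :
    (e : ℝ) + 1 ≤ y / (y - 1) * y ^ e := by
  have hy' : 0 < y - 1 := sub_pos.2 hy
  calc (e : ℝ) + 1 ≤ y / (y - 1) + e * y := by
        have h₁ : 1 ≤ y / (y - 1) := (one_le_div hy').2 (by linarith)
        have h₂ : (e : ℝ) ≤ e * y := le_mul_of_one_le_right e.cast_nonneg hy.le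
        linarith
    _ = y / (y - 1) * (1 + e * (y - 1)) := by field_simp
    _ ≤ y / (y - 1) * y ^ e := by
        have bernoulli := one_add_mul_sub_le_pow (a := y) (by linarith) e
        gcongr

theorem natCast_add_one_le_pow {y : ℝ} (hy : 2 ≤ y) (e : ℕ) : (e : ℝ) + 1 ≤ y ^ e :=
  calc (e : ℝ) + 1 ≤ 2 ^ e := mod_cast e.lt_two_pow_self
    _ ≤ y ^ e := by gcongr

theorem natCast_rpow_eq_prod_primeFactors {k : ℕ} (hk : k ≠ 0) (δ : ℝ) :
    (k : ℝ) ^ δ = ∏ p ∈ k.primeFactors, ((p : ℝ) ^ δ) ^ k.factorization p := by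
  conv_lhs => rw [← Nat.prod_factorization_pow_eq_self hk, Finsupp.prod, Nat.cast_prod]
  rw [← Real.finsetProd_rpow _ _ fun _ _ ↦ by positivity]
  refine prod_congr rfl fun p _ ↦ ?_
  rw [Nat.cast_pow, Real.rpow_pow_comm p.cast_nonneg]

theorem natCast_add_one_le_ite_mul_rpow_pow {δ x : ℝ} (hδ : 0 < δ) (hx : 2 ≤ x) (e : ℕ) :
    (e : ℝ) + 1 ≤ (if x ^ δ < 2 then (2 : ℝ) ^ δ / (2 ^ δ - 1) else 1) * (x ^ δ) ^ e := by
  have h2δ : 1 < (2 : ℝ) ^ δ := Real.one_lt_rpow one_lt_two hδ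
  split_ifs with hxδ
  · have : 0 < (2 : ℝ) ^ δ - 1 := sub_pos.2 h2δ
    calc (e : ℝ) + 1 ≤ 2 ^ δ / (2 ^ δ - 1) * ((2 : ℝ) ^ δ) ^ e := natCast_add_one_le_mul_pow h2δ e
      _ ≤ 2 ^ δ / (2 ^ δ - 1) * (x ^ δ) ^ e := by gcongr
  · simpa only [one_mul] using natCast_add_one_le_pow (not_lt.1 hxδ) e

theorem prod_primeFactors_ite_le_pow {δ M : ℝ} (hδ : 0 < δ) (hM : 1 ≤ M) (k : ℕ) :
    ∏ p ∈ k.primeFactors, (if (p : ℝ) ^ δ < 2 then M else 1) ≤ M ^ ⌈(2 : ℝ) ^ δ⁻¹⌉₊ := by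
  rw [← prod_filter, prod_const]
  refine pow_le_pow_right₀ hM ?_
  calc #{p ∈ k.primeFactors | ((p : ℕ) : ℝ) ^ δ < 2} ≤ #(range ⌈(2 : ℝ) ^ δ⁻¹⌉₊) := by
        refine card_le_card fun p hp ↦ mem_range.2 (Nat.lt_ceil.2 ?_)
        exact (Real.lt_rpow_inv_iff_of_pos p.cast_nonneg zero_le_two hδ).2 (mem_filter.1 hp).2
    _ = ⌈(2 : ℝ) ^ δ⁻¹⌉₊ := card_range _

theorem card_divisors_isBigO_rpow {δ : ℝ} (hδ : 0 < δ) :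
    (fun k : ℕ ↦ (#k.divisors : ℝ)) =O[⊤] fun k ↦ (k : ℝ) ^ δ := by
  set M : ℝ := 2 ^ δ / (2 ^ δ - 1)
  have hM : 1 ≤ M :=
    (one_le_div (sub_pos.2 (Real.one_lt_rpow one_lt_two hδ))).2 (sub_le_self _ zero_le_one)
  refine isBigO_top.2 ⟨M ^ ⌈(2 : ℝ) ^ δ⁻¹⌉₊, fun k ↦ ?_⟩
  rw [Real.norm_of_nonneg (by positivity), Real.norm_of_nonneg (by positivity)]
  rcases eq_or_ne k 0 with rfl | hk
  · rw [Nat.divisors_zero, card_empty, Nat.cast_zero]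
    positivity
  calc (#k.divisors : ℝ) = ∏ p ∈ k.primeFactors, ((k.factorization p : ℝ) + 1) := by
        exact_mod_cast Nat.card_divisors hk
    _ ≤ ∏ p ∈ k.primeFactors,
          (if (p : ℝ) ^ δ < 2 then M else 1) * ((p : ℝ) ^ δ) ^ k.factorization p :=
        prod_le_prod (fun _ _ ↦ by positivity) fun p hp ↦
          natCast_add_one_le_ite_mul_rpow_pow hδ
            (mod_cast (Nat.prime_of_mem_primeFactors hp).two_le) _
    _ = (∏ p ∈ k.primeFactors, if (p : ℝ) ^ δ < 2 then M else 1) * (k : ℝ) ^ δ := by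
        rw [prod_mul_distrib, natCast_rpow_eq_prod_primeFactors hk]
    _ ≤ M ^ ⌈(2 : ℝ) ^ δ⁻¹⌉₊ * (k : ℝ) ^ δ := by
        gcongr
        exact prod_primeFactors_ite_le_pow hδ hM k

/-- The largest number of divisors of a positive integer up to `M` (and `0` for `M = 0`): the
divisor function made monotone, so that size bounds can be substituted into it. -/
def maxCardDivisors (M : ℕ) : ℕ :=
  (Icc 1 M).sup fun k ↦ #k.divisors

theorem card_divisors_le_maxCardDivisors {k M : ℕ} (hk : k ≤ M) :
    #k.divisors ≤ maxCardDivisors M := by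
  rcases k.eq_zero_or_pos with rfl | hk₀
  · simp
  · exact le_sup (f := fun k ↦ #(Nat.divisors k)) (mem_Icc.2 ⟨hk₀, hk⟩)

theorem maxCardDivisors_isBigO_rpow {δ : ℝ} (hδ : 0 < δ) :
    (fun M : ℕ ↦ (maxCardDivisors M : ℝ)) =O[⊤] fun M ↦ (M : ℝ) ^ δ := by
  obtain ⟨C, hC⟩ := isBigO_top.1 (card_divisors_isBigO_rpow hδ)
  have hC₀ : 0 ≤ C := by simpa using (norm_nonneg _).trans (hC 1)
  refine isBigO_top.2 ⟨C, fun M ↦ ?_⟩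
  rw [Real.norm_of_nonneg (by positivity), Real.norm_of_nonneg (by positivity)]
  refine (Nat.le_floor_iff (by positivity)).1 (Finset.sup_le fun k hk ↦ Nat.le_floor ?_)
  calc (#k.divisors : ℝ) ≤ C * (k : ℝ) ^ δ := by
        simpa only [Real.norm_of_nonneg (Nat.cast_nonneg _),
          Real.norm_of_nonneg (Real.rpow_nonneg (Nat.cast_nonneg _) _)] using hC k
    _ ≤ C * (M : ℝ) ^ δ := by
        gcongr
        exact (mem_Icc.1 hk).2

theorem card_intDivisorsAntidiag_le (z : ℤ) : #z.divisorsAntidiag ≤ 2 * #z.natAbs.divisors :=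
  calc #z.divisorsAntidiag ≤ #z.divisors := by
        refine card_le_card_of_injOn Prod.fst (fun x hx ↦ ?_) fun x hx y hy hxy ↦ ?_
        · obtain ⟨hx, hz⟩ := Int.mem_divisorsAntidiag.1 hx
          exact Int.mem_divisors.2 ⟨Dvd.intro _ hx, hz⟩
        · obtain ⟨hx, hz⟩ := Int.mem_divisorsAntidiag.1 hx
          obtain ⟨hy, -⟩ := Int.mem_divisorsAntidiag.1 hy
          have hx₀ : x.1 ≠ 0 := left_ne_zero_of_mul (hx ▸ hz)
          refine Prod.ext hxy (mul_left_cancel₀ hx₀ (hx.trans ?_))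
          rw [hxy, hy]
    _ = 2 * #z.natAbs.divisors := by
        rw [Int.divisors, card_disjUnion, card_map, card_map, two_mul]

end DivisorBound

section Fibers

open Finset

variable {α β ι : Type*}

theorem card_le_mul_card_of_forall_fiber {S : Finset α} {T : Finset β} {f : α → β}
    (hf : ∀ a ∈ S, f a ∈ T) {n : ℕ}
    (hn : ∀ S' ⊆ S, (∀ a ∈ S', ∀ b ∈ S', f a = f b) → #S' ≤ n) : #S ≤ n * #T := by
  classical
  refine card_le_mul_card_image_of_maps_to hf n fun b _ ↦ hn _ (filter_subset _ _) ?_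
  intro a ha a' ha'
  rw [(mem_filter.1 ha).2, (mem_filter.1 ha').2]

theorem card_le_pow_of_agree_on [Fintype ι] {S : Finset (ι → β)} {I : Finset ι} {T : Finset β}
    (hI : ∀ f ∈ S, ∀ g ∈ S, ∀ i ∈ I, f i = g i) (hT : ∀ f ∈ S, ∀ i ∉ I, f i ∈ T) :
    #S ≤ #T ^ (Fintype.card ι - #I) := by
  classical
  calc #S ≤ #(Fintype.piFinset fun _ : ↥(Iᶜ) ↦ T) := by
        refine card_le_card_of_injOn (fun f i ↦ f i) (fun f hf ↦ ?_) fun f hf g hg hfg ↦ ?_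
        · exact Fintype.mem_piFinset.2 fun i ↦ hT f hf i (mem_compl.1 i.2)
        · funext i
          by_cases hi : i ∈ I
          · exact hI f hf g hg i hi
          · exact congrFun hfg ⟨i, mem_compl.2 hi⟩
    _ = #T ^ (Fintype.card ι - #I) := by
        rw [Fintype.card_piFinset, prod_const, card_univ, Fintype.card_coe, card_compl]

theorem card_le_card_mul_of_forall_exists [Fintype β] {S : Finset α} {P : α → β → Prop} {n : ℕ}
    (hP : ∀ a ∈ S, ∃ b, P a b) (hn : ∀ S' ⊆ S, ∀ b, (∀ a ∈ S', P a b) → #S' ≤ n) :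
    #S ≤ Fintype.card β * n := by
  classical
  calc #S ≤ #(univ.biUnion fun b ↦ {a ∈ S | P a b}) := by
        refine card_le_card fun a ha ↦ ?_
        obtain ⟨b, hb⟩ := hP a ha
        exact mem_biUnion.2 ⟨b, mem_univ b, mem_filter.2 ⟨ha, hb⟩⟩
    _ ≤ Fintype.card β * n := card_biUnion_le_card_mul _ _ _ fun b _ ↦
        hn _ (filter_subset _ _) b fun _ ha ↦ (mem_filter.1 ha).2

end Fibers

section OrthogonalTriples

open Finset
open scoped Matrix

variable {K : Type*} [Field K]

theorem crossProduct_apply_cyclic (u v : Fin 3 → K) (k : Fin 3) :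
    (u ⨯₃ v) k = u (k + 1) * v (k + 2) - u (k + 2) * v (k + 1) := by
  fin_cases k <;> rfl

-- With `X = x⁻¹`, `Y = y⁻¹`, `Z = z⁻¹` the equation reads `a * Y * Z + X * b * Z + X * c * Y = 0`,
-- and multiplication by `a` completes the product.
theorem inv_linear_factorization {a b c x y z : K} (hx : x ≠ 0) (hy : y ≠ 0) (hz : z ≠ 0)
    (h : x * a + y * b + z * c = 0) :
    (a * y⁻¹ + x⁻¹ * b) * (a * z⁻¹ + x⁻¹ * c) = x⁻¹ ^ 2 * (b * c) := by
  field_simp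
  linear_combination a * x * h

/-- The vectors `u` and `v` have linearly independent projections to every coordinate plane, so that
the plane they span is given by a linear equation without vanishing coefficients. -/
def GenericPair (u v : Fin 3 → K) : Prop :=
  ∀ k, (u ⨯₃ v) k ≠ 0

theorem GenericPair.injective_of_comp {κ : Type*} {u v : κ → K} {j : Fin 3 → κ}
    (h : GenericPair (u ∘ j) (v ∘ j)) : j.Injective := by
  have hne k : j (k + 1) ≠ j (k + 2) := by
    intro hk
    apply h k
    rw [crossProduct_apply_cyclic, Function.comp_apply, Function.comp_apply, Function.comp_apply,
      Function.comp_apply, hk, sub_self]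
  intro a b hab
  by_contra hne'
  obtain ⟨k, ⟨rfl, rfl⟩ | ⟨rfl, rfl⟩⟩ :
      ∃ k : Fin 3, a = k + 1 ∧ b = k + 2 ∨ a = k + 2 ∧ b = k + 1 := by
    clear hab
    decide +revert
  exacts [hne k hab, hne k hab.symm]

variable [DecidableEq K]

/-- The solutions `w ∈ E³` of the linear equation `c₀ w₀ + c₁ w₁ + c₂ w₂ = 0`. For `c = u ⨯₃ v`
this is the condition that `w`, `u`, `v` are linearly dependent. -/
def orthogonalTriples (E : Finset K) (c : Fin 3 → K) : Finset (Fin 3 → K) :=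
  {w ∈ Fintype.piFinset fun _ ↦ E | w ⬝ᵥ c = 0}

theorem mem_orthogonalTriples {E : Finset K} {c w : Fin 3 → K} :
    w ∈ orthogonalTriples E c ↔ (∀ k, w k ∈ E) ∧ w ⬝ᵥ c = 0 := by
  rw [orthogonalTriples, mem_filter, Fintype.mem_piFinset]

theorem orthogonalTriples_smul (E : Finset K) {a : K} (ha : a ≠ 0) (c : Fin 3 → K) :
    orthogonalTriples E (a • c) = orthogonalTriples E c := by
  ext w
  rw [mem_orthogonalTriples, mem_orthogonalTriples, dotProduct_smul, smul_eq_zero_iff_right ha]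

end OrthogonalTriples

section UnitFractions

open Finset
open scoped Matrix Combinatorics.Additive

variable {H : ℝ} {x : ℚ}

theorem Egyptian.ne_zero (hx : x ∈ Egyptian H) : x ≠ 0 := by
  obtain ⟨a, ha, -, rfl⟩ := hx
  exact one_div_ne_zero (Int.cast_ne_zero.2 ha)

theorem Egyptian.num_inv_cast (hx : x ∈ Egyptian H) : (x⁻¹.num : ℚ) = x⁻¹ := by
  obtain ⟨a, -, -, rfl⟩ := hx
  rw [one_div, inv_inv, Rat.num_intCast]

theorem Egyptian.num_inv_ne_zero (hx : x ∈ Egyptian H) : x⁻¹.num ≠ 0 :=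
  Rat.num_ne_zero.2 (inv_ne_zero (Egyptian.ne_zero hx))

theorem Egyptian.natAbs_num_inv_le (hx : x ∈ Egyptian H) : x⁻¹.num.natAbs ≤ ⌊H⌋₊ := by
  obtain ⟨a, -, ha, rfl⟩ := hx
  rw [one_div, inv_inv, Rat.num_intCast]
  exact Nat.le_floor (by rwa [Nat.cast_natAbs, Int.cast_abs])

theorem Egyptian.subset_image_Icc (H : ℝ) :
    Egyptian H ⊆ (Icc (-⌊H⌋₊ : ℤ) ⌊H⌋₊).image fun a : ℤ ↦ (a : ℚ)⁻¹ := by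
  intro x hx
  have hle := Egyptian.natAbs_num_inv_le hx
  refine mem_coe.2 (mem_image.2 ⟨x⁻¹.num, mem_Icc.2 (by omega), ?_⟩)
  rw [Egyptian.num_inv_cast hx, inv_inv]

theorem Egyptian.finite (H : ℝ) : (Egyptian H).Finite :=
  (finite_toSet _).subset (Egyptian.subset_image_Icc H)

/-- The set `E(H)` of unit fractions of height at most `H` as a `Finset`, for counting. -/
noncomputable def egyptianFinset (H : ℝ) : Finset ℚ :=
  (Egyptian.finite H).toFinset

theorem mem_egyptianFinset : x ∈ egyptianFinset H ↔ x ∈ Egyptian H :=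
  Set.Finite.mem_toFinset _

theorem card_egyptianFinset_le (H : ℝ) : #(egyptianFinset H) ≤ 2 * ⌊H⌋₊ + 1 :=
  calc #(egyptianFinset H) ≤ #((Icc (-⌊H⌋₊ : ℤ) ⌊H⌋₊).image fun a : ℤ ↦ (a : ℚ)⁻¹) :=
        card_le_card fun _ hx ↦ Egyptian.subset_image_Icc H (mem_egyptianFinset.1 hx)
    _ ≤ #(Icc (-⌊H⌋₊ : ℤ) ⌊H⌋₊) := card_image_le
    _ = 2 * ⌊H⌋₊ + 1 := by
        rw [Int.card_Icc]
        omega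

theorem card_egyptian_pairs_le (H : ℝ) {p q r s z : ℤ} (hp : p ≠ 0) (hr : r ≠ 0) (hz : z ≠ 0) :
    #{t ∈ egyptianFinset H ×ˢ egyptianFinset H |
      ((p : ℚ) * t.1⁻¹ + q) * (r * t.2⁻¹ + s) = z} ≤ 2 * #z.natAbs.divisors := by
  refine le_trans (card_le_card_of_injOn (fun t : ℚ × ℚ ↦ (p * t.1⁻¹.num + q, r * t.2⁻¹.num + s))
    (fun t ht ↦ ?_) fun t ht t' ht' htt' ↦ ?_) (card_intDivisorsAntidiag_le z)
  · obtain ⟨hmem, heq⟩ := mem_filter.1 ht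
    obtain ⟨h₁, h₂⟩ := mem_product.1 hmem
    rw [← Egyptian.num_inv_cast (mem_egyptianFinset.1 h₁),
      ← Egyptian.num_inv_cast (mem_egyptianFinset.1 h₂)] at heq
    exact Int.mem_divisorsAntidiag.2 ⟨mod_cast heq, hz⟩
  · obtain ⟨h₁, h₂⟩ := mem_product.1 (mem_filter.1 ht).1
    obtain ⟨h₁', h₂'⟩ := mem_product.1 (mem_filter.1 ht').1
    have eq_of_num {x y : ℚ} (hx : x ∈ egyptianFinset H) (hy : y ∈ egyptianFinset H)
        (hxy : x⁻¹.num = y⁻¹.num) : x = y := by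
      rw [← inv_inj, ← Egyptian.num_inv_cast (mem_egyptianFinset.1 hx), hxy,
        Egyptian.num_inv_cast (mem_egyptianFinset.1 hy)]
    simp only [Prod.mk.injEq, add_left_inj, mul_right_inj' hp, mul_right_inj' hr] at htt'
    exact Prod.ext (eq_of_num h₁ h₁' htt'.1) (eq_of_num h₂ h₂' htt'.2)

theorem mulEnergy_egyptianFinset_le (H : ℝ) :
    Eₘ[egyptianFinset H] ≤ 2 * maxCardDivisors (⌊H⌋₊ ^ 2) * #(egyptianFinset H) ^ 2 := by
  set E := egyptianFinset H
  rw [mulEnergy_eq_card_filter, sq #E, ← card_product]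
  refine card_le_mul_card_of_forall_fiber (f := Prod.fst)
    (fun t ht ↦ (mem_product.1 (mem_filter.1 ht).1).1) fun S' hS' hconst ↦ ?_
  rcases S'.eq_empty_or_nonempty with rfl | ⟨t₀, ht₀⟩
  · exact zero_le
  obtain ⟨⟨⟨ha, hb⟩, -⟩, -⟩ := by
    simpa only [mem_filter, mem_product] using hS' ht₀
  replace ha := mem_egyptianFinset.1 ha
  replace hb := mem_egyptianFinset.1 hb
  set a := t₀.1.1⁻¹.num
  set b := t₀.1.2⁻¹.num
  calc #S' ≤ #{t ∈ E ×ˢ E | ((1 : ℤ) * t.1⁻¹ + (0 : ℤ)) * ((1 : ℤ) * t.2⁻¹ + (0 : ℤ)) =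
          ((a * b : ℤ) : ℚ)} := by
        refine card_le_card_of_injOn Prod.snd (fun t ht ↦ ?_)
          fun t ht t' ht' htt' ↦ Prod.ext (hconst t ht t' ht') htt'
        obtain ⟨hmem, heq⟩ := mem_filter.1 (hS' ht)
        refine mem_filter.2 ⟨(mem_product.1 hmem).2, ?_⟩
        rw [hconst t ht t₀ ht₀] at heq
        push_cast
        rw [Egyptian.num_inv_cast ha, Egyptian.num_inv_cast hb, one_mul, one_mul, add_zero,
          add_zero, ← mul_inv, ← mul_inv, heq]
    _ ≤ 2 * #(a * b).natAbs.divisors :=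
        card_egyptian_pairs_le H one_ne_zero one_ne_zero
          (mul_ne_zero (Egyptian.num_inv_ne_zero ha) (Egyptian.num_inv_ne_zero hb))
    _ ≤ 2 * maxCardDivisors (⌊H⌋₊ ^ 2) := by
        refine Nat.mul_le_mul_left 2 (card_divisors_le_maxCardDivisors ?_)
        rw [Int.natAbs_mul, sq]
        exact Nat.mul_le_mul (Egyptian.natAbs_num_inv_le ha) (Egyptian.natAbs_num_inv_le hb)

theorem card_orthogonalTriples_egyptianFinset_le (H : ℝ) {c : Fin 3 → ℤ} {M : ℕ}
    (hc : ∀ k, c k ≠ 0) (hcM : ∀ k, (c k).natAbs ≤ M) :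
    #(orthogonalTriples (egyptianFinset H) fun k ↦ (c k : ℚ)) ≤
      2 * maxCardDivisors (⌊H⌋₊ ^ 2 * M ^ 2) * #(egyptianFinset H) := by
  set E := egyptianFinset H
  refine card_le_mul_card_of_forall_fiber (f := fun w ↦ w 0)
    (fun w hw ↦ (mem_orthogonalTriples.1 hw).1 0) fun S' hS' hconst ↦ ?_
  rcases S'.eq_empty_or_nonempty with rfl | ⟨w₀, hw₀⟩
  · exact zero_le
  have hx := mem_egyptianFinset.1 ((mem_orthogonalTriples.1 (hS' hw₀)).1 0)
  set X := (w₀ 0)⁻¹.num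
  have hX₀ : X ≠ 0 := Egyptian.num_inv_ne_zero hx
  have hX : (X : ℚ) = (w₀ 0)⁻¹ := Egyptian.num_inv_cast hx
  set z : ℤ := X ^ 2 * (c 1 * c 2) with hz_def
  calc #S' ≤ #{t ∈ E ×ˢ E | ((c 0 : ℤ) * t.1⁻¹ + (X * c 1 : ℤ)) *
          ((c 0 : ℤ) * t.2⁻¹ + (X * c 2 : ℤ)) = (z : ℚ)} := by
        refine card_le_card_of_injOn (fun w ↦ (w 1, w 2)) (fun w hw ↦ ?_) fun w hw w' hw' hww' ↦ ?_
        · obtain ⟨hmem, heq⟩ := mem_orthogonalTriples.1 (hS' hw)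
          refine mem_filter.2 ⟨mem_product.2 ⟨hmem 1, hmem 2⟩, ?_⟩
          rw [dotProduct, Fin.sum_univ_three, hconst w hw w₀ hw₀] at heq
          rw [hz_def, Int.cast_mul, Int.cast_mul, Int.cast_mul, Int.cast_pow, Int.cast_mul, hX]
          exact inv_linear_factorization (Egyptian.ne_zero hx)
            (Egyptian.ne_zero (mem_egyptianFinset.1 (hmem 1)))
            (Egyptian.ne_zero (mem_egyptianFinset.1 (hmem 2))) heq
        · obtain ⟨h1, h2⟩ := Prod.mk.inj hww'
          funext k
          fin_cases k
          exacts [hconst w hw w' hw', h1, h2]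
    _ ≤ 2 * #z.natAbs.divisors :=
        card_egyptian_pairs_le H (hc 0) (hc 0)
          (mul_ne_zero (pow_ne_zero 2 hX₀) (mul_ne_zero (hc 1) (hc 2)))
    _ ≤ 2 * maxCardDivisors (⌊H⌋₊ ^ 2 * M ^ 2) := by
        refine Nat.mul_le_mul_left 2 (card_divisors_le_maxCardDivisors ?_)
        rw [hz_def, Int.natAbs_mul, Int.natAbs_pow, Int.natAbs_mul, sq M]
        exact Nat.mul_le_mul (Nat.pow_le_pow_left (Egyptian.natAbs_num_inv_le hx) 2)
          (Nat.mul_le_mul (hcM 1) (hcM 2))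

theorem exists_smul_cross_eq_intCast {u v : Fin 3 → ℚ} (hu : ∀ k, u k ∈ Egyptian H)
    (hv : ∀ k, v k ∈ Egyptian H) :
    ∃ a : ℚ, a ≠ 0 ∧ ∃ c : Fin 3 → ℤ,
      (∀ k, (c k).natAbs ≤ 2 * ⌊H⌋₊ ^ 4) ∧ a • (u ⨯₃ v) = fun k ↦ (c k : ℚ) := by
  have hu₀ k : u k ≠ 0 := Egyptian.ne_zero (hu k)
  have hv₀ k : v k ≠ 0 := Egyptian.ne_zero (hv k)
  set p : Fin 3 → ℤ := fun k ↦ (u k)⁻¹.num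
  set q : Fin 3 → ℤ := fun k ↦ (v k)⁻¹.num
  have hp k : (p k : ℚ) = (u k)⁻¹ := Egyptian.num_inv_cast (hu k)
  have hq k : (q k : ℚ) = (v k)⁻¹ := Egyptian.num_inv_cast (hv k)
  refine ⟨∏ k, (u k)⁻¹ * (v k)⁻¹, Finset.prod_ne_zero_iff.2 fun k _ ↦
      mul_ne_zero (inv_ne_zero (hu₀ k)) (inv_ne_zero (hv₀ k)),
    fun k ↦ p k * q k * (p (k + 2) * q (k + 1) - p (k + 1) * q (k + 2)), fun k ↦ ?_, ?_⟩
  · have hpN k : (p k).natAbs ≤ ⌊H⌋₊ := Egyptian.natAbs_num_inv_le (hu k)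
    have hqN k : (q k).natAbs ≤ ⌊H⌋₊ := Egyptian.natAbs_num_inv_le (hv k)
    calc (p k * q k * (p (k + 2) * q (k + 1) - p (k + 1) * q (k + 2))).natAbs
        ≤ (p k).natAbs * (q k).natAbs * ((p (k + 2)).natAbs * (q (k + 1)).natAbs +
            (p (k + 1)).natAbs * (q (k + 2)).natAbs) := by
          rw [Int.natAbs_mul, Int.natAbs_mul]
          refine Nat.mul_le_mul_left _ ((Int.natAbs_sub_le _ _).trans_eq ?_)
          rw [Int.natAbs_mul, Int.natAbs_mul]
      _ ≤ ⌊H⌋₊ * ⌊H⌋₊ * (⌊H⌋₊ * ⌊H⌋₊ + ⌊H⌋₊ * ⌊H⌋₊) := by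
          gcongr <;> first | exact hpN _ | exact hqN _
      _ = 2 * ⌊H⌋₊ ^ 4 := by ring
  · funext k
    have hprod (f : Fin 3 → ℚ) : ∏ j, f j = f k * f (k + 1) * f (k + 2) := by
      rw [← Equiv.prod_comp (Equiv.addLeft k) f, Fin.prod_univ_three]
      simp only [Equiv.coe_addLeft, add_zero]
    rw [Pi.smul_apply, crossProduct_apply_cyclic, hprod, smul_eq_mul]
    push_cast
    simp only [hp, hq]
    have := hu₀ (k + 1); have := hu₀ (k + 2); have := hv₀ (k + 1); have := hv₀ (k + 2)
    field_simp

theorem card_orthogonalTriples_cross_le {u v : Fin 3 → ℚ} (hu : ∀ k, u k ∈ Egyptian H)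
    (hv : ∀ k, v k ∈ Egyptian H) (huv : GenericPair u v) :
    #(orthogonalTriples (egyptianFinset H) (u ⨯₃ v)) ≤
      2 * maxCardDivisors (⌊H⌋₊ ^ 2 * (2 * ⌊H⌋₊ ^ 4) ^ 2) * #(egyptianFinset H) := by
  obtain ⟨a, ha, c, hcN, hac⟩ := exists_smul_cross_eq_intCast hu hv
  rw [← orthogonalTriples_smul _ ha, hac]
  refine card_orthogonalTriples_egyptianFinset_le H (fun k hk ↦ ?_) hcN
  have hk' : a * (u ⨯₃ v) k = c k := congrFun hac k
  rw [hk, Int.cast_zero] at hk'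
  exact mul_ne_zero ha (huv k) hk'

end UnitFractions

section RankTwo

open scoped Matrix

variable {K ι κ : Type*} [Field K] [Fintype κ] {A B : Matrix ι κ K} {r s t : ι} {p q : κ}

theorem det_submatrix_eq_zero_of_rank_lt {k : Type*} [Fintype k] [DecidableEq k]
    (hA : A.rank < Fintype.card k) (i : k → ι) (j : k → κ) : (A.submatrix i j).det = 0 := by
  by_contra hdet
  have hrank := Matrix.rank_of_isUnit _ ((Matrix.isUnit_iff_isUnit_det _).2 (Ne.isUnit hdet))
  exact ((Matrix.rank_submatrix_le A i j).trans_lt hA).ne hrank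

theorem dotProduct_crossProduct_eq_zero_of_rank_le_two (hA : A.rank ≤ 2) (j : Fin 3 → κ)
    (t r s : ι) : (A t ∘ j) ⬝ᵥ ((A r ∘ j) ⨯₃ (A s ∘ j)) = 0 := by
  have hdet := det_submatrix_eq_zero_of_rank_lt (k := Fin 3) (by simpa using Nat.lt_succ_of_le hA)
    ![t, r, s] j
  rw [triple_product_eq_det, ← hdet]
  congr 1
  ext a b
  fin_cases a <;> rfl

-- Expanding a singular `3 × 3` block along its corner expresses every entry of `A` through the
-- rows `r`, `s` and the columns `p`, `q`.
theorem eq_of_rank_le_two (hA : A.rank ≤ 2) (hB : B.rank ≤ 2)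
    (hminor : A r p * A s q ≠ A s p * A r q) (hr : A r = B r) (hs : A s = B s)
    (hp : ∀ i, A i p = B i p) (hq : ∀ i, A i q = B i q) : A = B := by
  ext i j
  have hdetA := dotProduct_crossProduct_eq_zero_of_rank_le_two hA ![p, q, j] i r s
  have hdetB := dotProduct_crossProduct_eq_zero_of_rank_le_two hB ![p, q, j] i r s
  simp only [cross_apply, dotProduct, Fin.sum_univ_three, Function.comp_apply,
    Matrix.cons_val] at hdetA hdetB
  rw [← hr, ← hs, ← hp, ← hq] at hdetB
  refine mul_right_cancel₀ (sub_ne_zero.2 hminor) ?_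
  linear_combination hdetA - hdetB

theorem mem_span_row_of_rank_le_two (hA : A.rank ≤ 2) (hminor : A r p * A s q ≠ A s p * A r q)
    (hrp : A r p ≠ 0) (ht : A r p * A t q = A t p * A r q) : A t ∈ K ∙ A r := by
  refine Submodule.mem_span_singleton.2 ⟨A t p / A r p, funext fun j ↦ ?_⟩
  have hdet := dotProduct_crossProduct_eq_zero_of_rank_le_two hA ![p, q, j] t r s
  simp only [cross_apply, dotProduct, Fin.sum_univ_three, Function.comp_apply,
    Matrix.cons_val] at hdet
  have hcancel : (A r p * A s q - A s p * A r q) * (A t p * A r j) =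
      (A r p * A s q - A s p * A r q) * (A r p * A t j) := by
    linear_combination (A r j * A s p - A r p * A s j) * ht - A r p * hdet
  rw [Pi.smul_apply, smul_eq_mul, div_mul_eq_mul_div, div_eq_iff hrp,
    mul_left_cancel₀ (sub_ne_zero.2 hminor) hcancel, mul_comm]

theorem exists_minor_ne_of_one_lt_rank (hA₀ : ∀ i j, A i j ≠ 0) (hA : 1 < A.rank) :
    ∃ r s p q, A r p * A s q ≠ A s p * A r q := by
  by_contra! hminor
  rcases isEmpty_or_nonempty ι with hι | ⟨⟨r⟩⟩
  · rw [Subsingleton.elim A 0, Matrix.rank_zero] at hA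
    omega
  rcases isEmpty_or_nonempty κ with hκ | ⟨⟨p⟩⟩
  · rw [Subsingleton.elim A 0, Matrix.rank_zero] at hA
    omega
  refine hA.not_ge ?_
  have hfactor : A = Matrix.vecMulVec (fun i ↦ A i p / A r p) (A r) := by
    ext i j
    rw [Matrix.vecMulVec_apply, div_mul_eq_mul_div, eq_div_iff (hA₀ r p), mul_comm,
      hminor r i p j]
  rw [hfactor]
  exact Matrix.rank_vecMulVec_le _ _

theorem injective_vecCons₃ {α : Type*} {a b c : α} (hab : a ≠ b) (hac : a ≠ c) (hbc : b ≠ c) :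
    Function.Injective ![a, b, c] := by
  intro i j hij
  fin_cases i <;> fin_cases j <;> simp_all

/-- The degenerate configuration of rows of a rank two matrix: all rows of `A` lie on the lines
spanned by the rows `i 0` and `i 1`, and the row `i 2` lies on the first of them. -/
def RowsOnTwoLines (A : Matrix ι κ K) (i : Fin 3 → ι) : Prop :=
  A (i 2) ∈ K ∙ A (i 0) ∧ ∀ r, A r ∈ K ∙ A (i 0) ∨ A r ∈ K ∙ A (i 1)

theorem exists_genericPair_or_rowsOnTwoLines [Fintype ι] (hι : 3 ≤ Fintype.card ι)
    (hA₀ : ∀ i j, A i j ≠ 0) (hA : A.rank ≤ 2) (hminor : A r p * A s q ≠ A s p * A r q) :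
    (∃ t, GenericPair (Aᵀ p ∘ ![r, s, t]) (Aᵀ q ∘ ![r, s, t])) ∨
      ∃ i : Fin 3 → ι, i.Injective ∧ RowsOnTwoLines A i := by
  classical
  by_cases hgen : ∃ t, A r p * A t q ≠ A t p * A r q ∧ A s p * A t q ≠ A t p * A s q
  · obtain ⟨t, hrt, hst⟩ := hgen
    refine .inl ⟨t, fun k ↦ ?_⟩
    rw [crossProduct_apply_cyclic, sub_ne_zero]
    fin_cases k
    exacts [hst, hrt.symm, hminor]
  · push Not at hgen
    have hlines t : A t ∈ K ∙ A r ∨ A t ∈ K ∙ A s := by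
      by_cases hrt : A r p * A t q = A t p * A r q
      · exact .inl (mem_span_row_of_rank_le_two hA hminor (hA₀ r p) hrt)
      · exact .inr (mem_span_row_of_rank_le_two hA hminor.symm (hA₀ s p) (hgen t hrt))
    have hrs : r ≠ s := by
      rintro rfl
      exact hminor rfl
    obtain ⟨t, hrt, hst⟩ : ∃ t, t ≠ r ∧ t ≠ s := by
      simpa using Finset.exists_mem_notMem_of_card_lt_card (s := {r, s}) (t := Finset.univ)
        (Finset.card_le_two.trans_lt hι)
    refine .inr ?_
    rcases hlines t with ht | ht
    · exact ⟨![r, s, t], injective_vecCons₃ hrs hrt.symm hst.symm, ht, hlines⟩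
    · exact ⟨![s, r, t], injective_vecCons₃ hrs.symm hst.symm hrt.symm, ht, fun t ↦ (hlines t).symm⟩

end RankTwo

section TwoLines

open Finset
open scoped Matrix Combinatorics.Additive

variable {K ι κ : Type*} [Field K] {E : Finset K}

theorem eq_of_mem_span_singleton_of_apply_eq {u v w : κ → K} {c : κ} (hu : u c ≠ 0)
    (hv : v ∈ K ∙ u) (hw : w ∈ K ∙ u) (h : v c = w c) : v = w := by
  obtain ⟨a, rfl⟩ := Submodule.mem_span_singleton.1 hv
  obtain ⟨b, rfl⟩ := Submodule.mem_span_singleton.1 hw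
  rw [mul_right_cancel₀ hu h]

theorem card_le_of_forall_mem_span_singleton {T : Finset (κ → K)} {u : κ → K} {c : κ}
    (hE : ∀ w ∈ T, w c ∈ E) (hT : ∀ w ∈ T, w ∈ K ∙ u) (hu : u c ≠ 0) : #T ≤ #E :=
  card_le_card_of_injOn (fun w ↦ w c) hE fun _ hv _ hw ↦
    eq_of_mem_span_singleton_of_apply_eq hu (hT _ hv) (hT _ hw)

theorem card_le_two_mul_of_forall_mem_span_or {T : Finset (κ → K)} {u v : κ → K} {c : κ}
    (hE : ∀ w ∈ T, w c ∈ E) (hT : ∀ w ∈ T, w ∈ K ∙ u ∨ w ∈ K ∙ v) (hu : u c ≠ 0) (hv : v c ≠ 0) :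
    #T ≤ 2 * #E := by
  classical
  have hline {x : κ → K} (hx : x c ≠ 0) : #{w ∈ T | w ∈ K ∙ x} ≤ #E :=
    card_le_of_forall_mem_span_singleton (fun w hw ↦ hE w (mem_filter.1 hw).1)
      (fun w hw ↦ (mem_filter.1 hw).2) hx
  calc #T = #({w ∈ T | w ∈ K ∙ u} ∪ {w ∈ T | w ∈ K ∙ v}) := by
        rw [← filter_or, filter_true_of_mem hT]
    _ ≤ #{w ∈ T | w ∈ K ∙ u} + #{w ∈ T | w ∈ K ∙ v} := card_union_le _ _
    _ ≤ 2 * #E := by linarith [hline hu, hline hv]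

theorem card_le_of_rowsOnTwoLines_of_agree [Fintype ι] [Nonempty κ] {S : Finset (Matrix ι κ K)}
    {i : Fin 3 → ι} (hi : i.Injective) (h0 : 0 ∉ E) (hE : ∀ A ∈ S, ∀ r c, A r c ∈ E)
    (hS : ∀ A ∈ S, RowsOnTwoLines A i) (hagree : ∀ A ∈ S, ∀ B ∈ S, ∀ k, A (i k) = B (i k)) :
    #S ≤ (2 * #E) ^ (Fintype.card ι - 3) := by
  classical
  rcases S.eq_empty_or_nonempty with rfl | ⟨B, hB⟩
  · exact zero_le
  obtain ⟨c⟩ := ‹Nonempty κ›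
  have hne r : B r c ≠ 0 := fun h ↦ h0 (h ▸ hE B hB r c)
  set T : Finset (κ → K) := S.biUnion fun A ↦ univ.image fun r ↦ A r
  have hTrow {w : κ → K} : w ∈ T → ∃ A ∈ S, ∃ r, A r = w := by
    simp only [T, mem_biUnion, mem_image, mem_univ, true_and, imp_self]
  have hT : #T ≤ 2 * #E := by
    refine card_le_two_mul_of_forall_mem_span_or (fun w hw ↦ ?_) (fun w hw ↦ ?_)
      (hne (i 0)) (hne (i 1)) <;> obtain ⟨A, hA, r, rfl⟩ := hTrow hw
    · exact hE A hA r c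
    · rw [← hagree A hA B hB, ← hagree A hA B hB]
      exact (hS A hA).2 r
  calc #S ≤ #T ^ (Fintype.card ι - #(univ.image i)) := by
        refine card_le_pow_of_agree_on (fun A hA A' hA' r hr ↦ ?_) fun A hA r _ ↦
          mem_biUnion.2 ⟨A, hA, mem_image_of_mem _ (mem_univ r)⟩
        obtain ⟨k, -, rfl⟩ := mem_image.1 hr
        exact hagree A hA A' hA' k
    _ ≤ (2 * #E) ^ (Fintype.card ι - 3) := by
        rw [card_image_of_injective _ hi, card_univ, Fintype.card_fin]
        exact Nat.pow_le_pow_left hT _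

variable [Fintype κ]

theorem card_collinear_pairs_le [DecidableEq K] {P : Finset ((κ → K) × (κ → K))}
    (hκ : 2 ≤ Fintype.card κ) (h0 : 0 ∉ E) (hE₁ : ∀ t ∈ P, ∀ c, t.1 c ∈ E)
    (hE₂ : ∀ t ∈ P, ∀ c, t.2 c ∈ E) (hP : ∀ t ∈ P, t.2 ∈ K ∙ t.1) :
    #P ≤ #E ^ (Fintype.card κ - 2) * Eₘ[E] := by
  classical
  obtain ⟨c, d, hcd⟩ := Fintype.exists_pair_of_one_lt_card hκ
  rw [mulEnergy_eq_card_filter]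
  refine card_le_mul_card_of_forall_fiber
    (f := fun t ↦ ((t.1 c, t.2 d), (t.1 d, t.2 c))) (fun t ht ↦ ?_) fun S hS hconst ↦ ?_
  · obtain ⟨a, ha⟩ := Submodule.mem_span_singleton.1 (hP t ht)
    refine mem_filter.2 ⟨mem_product.2 ⟨mem_product.2 ⟨hE₁ t ht c, hE₂ t ht d⟩,
      mem_product.2 ⟨hE₁ t ht d, hE₂ t ht c⟩⟩, ?_⟩
    simp only [← ha, Pi.smul_apply, smul_eq_mul]
    ring
  · simp only [Prod.mk.injEq] at hconst
    calc #S = #(S.image Prod.fst) := by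
          refine (card_image_of_injOn fun t ht t' ht' htt' ↦ Prod.ext htt' ?_).symm
          have hne : t.1 c ≠ 0 := fun h ↦ h0 (h ▸ hE₁ t (hS ht) c)
          exact eq_of_mem_span_singleton_of_apply_eq hne (hP t (hS ht)) (htt' ▸ hP t' (hS ht'))
            (hconst t ht t' ht').2.2
      _ ≤ #E ^ (Fintype.card κ - #{c, d}) := by
          refine card_le_pow_of_agree_on ?_ ?_
          · simp only [forall_mem_image, forall_mem_insert, mem_singleton, forall_eq]
            exact fun t ht t' ht' ↦ ⟨(hconst t ht t' ht').1.1, (hconst t ht t' ht').2.1⟩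
          · simp only [forall_mem_image]
            exact fun t ht i _ ↦ hE₁ t (hS ht) i
      _ = #E ^ (Fintype.card κ - 2) := by rw [card_pair hcd]

theorem card_le_of_rowsOnTwoLines [DecidableEq K] [Fintype ι] {S : Finset (Matrix ι κ K)}
    {i : Fin 3 → ι} (hi : i.Injective) (hκ : 2 ≤ Fintype.card κ) (h0 : 0 ∉ E)
    (hE : ∀ A ∈ S, ∀ r c, A r c ∈ E) (hS : ∀ A ∈ S, RowsOnTwoLines A i) :
    #S ≤ (2 * #E) ^ (Fintype.card ι - 3) *
      (#E ^ Fintype.card κ * (#E ^ (Fintype.card κ - 2) * Eₘ[E])) := by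
  classical
  have : Nonempty κ := Fintype.card_pos_iff.1 (by omega)
  set V : Finset (κ → K) := Fintype.piFinset fun _ ↦ E
  set P : Finset ((κ → K) × (κ → K)) := S.image fun A ↦ (A (i 0), A (i 2))
  let f (A : Matrix ι κ K) : (κ → K) × (κ → K) × (κ → K) := (A (i 1), A (i 0), A (i 2))
  have hP : #P ≤ #E ^ (Fintype.card κ - 2) * Eₘ[E] := by
    refine card_collinear_pairs_le hκ h0 ?_ ?_ ?_ <;> simp only [P, forall_mem_image]
    exacts [fun A hA ↦ hE A hA _, fun A hA ↦ hE A hA _, fun A hA ↦ (hS A hA).1]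
  calc #S ≤ (2 * #E) ^ (Fintype.card ι - 3) * #(V ×ˢ P) := by
        have hf : ∀ A ∈ S, f A ∈ V ×ˢ P := fun A hA ↦
          mem_product.2 ⟨Fintype.mem_piFinset.2 (hE A hA (i 1)), mem_image_of_mem _ hA⟩
        refine card_le_mul_card_of_forall_fiber hf fun S' hS' hconst ↦ ?_
        refine card_le_of_rowsOnTwoLines_of_agree hi h0 (fun A hA ↦ hE A (hS' hA))
          (fun A hA ↦ hS A (hS' hA)) fun A hA B hB ↦ ?_
        obtain ⟨h₁, h₀₂⟩ := Prod.mk.inj (hconst A hA B hB)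
        obtain ⟨h₀, h₂⟩ := Prod.mk.inj h₀₂
        exact Fin.forall_fin_succ.2 ⟨h₀, Fin.forall_fin_two.2 ⟨h₁, h₂⟩⟩
    _ = (2 * #E) ^ (Fintype.card ι - 3) * (#E ^ Fintype.card κ * #P) := by
        rw [card_product, Fintype.card_piFinset, prod_const, card_univ]
    _ ≤ _ := by gcongr

theorem card_le_of_exists_rowsOnTwoLines [DecidableEq K] [Fintype ι] {S : Finset (Matrix ι κ K)}
    (hκ : 2 ≤ Fintype.card κ) (h0 : 0 ∉ E) (hE : ∀ A ∈ S, ∀ r c, A r c ∈ E)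
    (hS : ∀ A ∈ S, ∃ i : Fin 3 → ι, i.Injective ∧ RowsOnTwoLines A i) :
    #S ≤ Fintype.card (Fin 3 → ι) * ((2 * #E) ^ (Fintype.card ι - 3) *
      (#E ^ Fintype.card κ * (#E ^ (Fintype.card κ - 2) * Eₘ[E]))) := by
  refine card_le_card_mul_of_forall_exists hS fun S' hS' i hi ↦ ?_
  rcases S'.eq_empty_or_nonempty with rfl | ⟨A, hA⟩
  · exact zero_le
  exact card_le_of_rowsOnTwoLines (hi A hA).1 hκ h0 (fun A hA ↦ hE A (hS' hA))
    fun A hA ↦ (hi A hA).2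

theorem card_le_of_exists_rowsOnTwoLines_transpose [DecidableEq K] [Fintype ι]
    {S : Finset (Matrix ι κ K)} (hι : 2 ≤ Fintype.card ι) (h0 : 0 ∉ E)
    (hE : ∀ A ∈ S, ∀ r c, A r c ∈ E)
    (hS : ∀ A ∈ S, ∃ j : Fin 3 → κ, j.Injective ∧ RowsOnTwoLines Aᵀ j) :
    #S ≤ Fintype.card (Fin 3 → κ) * ((2 * #E) ^ (Fintype.card κ - 3) *
      (#E ^ Fintype.card ι * (#E ^ (Fintype.card ι - 2) * Eₘ[E]))) := by
  classical
  rw [← card_image_of_injective S Matrix.transpose_injective]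
  refine card_le_of_exists_rowsOnTwoLines hι h0 ?_ ?_ <;> simp only [forall_mem_image]
  exacts [fun A hA r c ↦ hE A hA c r, hS]

end TwoLines

section GenericFrames

open Finset
open scoped Matrix

variable {K ι κ : Type*} [Field K]

/-- The generic configuration in a rank two matrix: the columns `j 0`, `j 1` restricted to the three
rows `i`, and the rows `i 0`, `i 1` restricted to the three columns `j`, are generic pairs. -/
def GenericFrame (A : Matrix ι κ K) (i : Fin 3 → ι) (j : Fin 3 → κ) : Prop :=
  GenericPair (Aᵀ (j 0) ∘ i) (Aᵀ (j 1) ∘ i) ∧ GenericPair (A (i 0) ∘ j) (A (i 1) ∘ j)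

theorem exists_genericFrame_or_rowsOnTwoLines [Fintype ι] [Fintype κ] {A : Matrix ι κ K}
    (hι : 3 ≤ Fintype.card ι) (hκ : 3 ≤ Fintype.card κ) (hA₀ : ∀ i j, A i j ≠ 0)
    (hA : A.rank = 2) :
    (∃ i j, GenericFrame A i j) ∨ (∃ i : Fin 3 → ι, i.Injective ∧ RowsOnTwoLines A i) ∨
      ∃ j : Fin 3 → κ, j.Injective ∧ RowsOnTwoLines Aᵀ j := by
  obtain ⟨r, s, p, q, hminor⟩ := exists_minor_ne_of_one_lt_rank hA₀ (by rw [hA]; norm_num)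
  have hminor' : Aᵀ p r * Aᵀ q s ≠ Aᵀ q r * Aᵀ p s := by
    rwa [mul_comm (Aᵀ q r)]
  rcases exists_genericPair_or_rowsOnTwoLines hι hA₀ hA.le hminor with ⟨t, ht⟩ | hrows
  · rcases exists_genericPair_or_rowsOnTwoLines hκ (fun j i ↦ hA₀ i j)
      ((Matrix.rank_transpose A).trans hA).le hminor' with ⟨l, hl⟩ | hcols
    · exact .inl ⟨![r, s, t], ![p, q, l], ht, hl⟩
    · exact .inr (.inr hcols)
  · exact .inr (.inl hrows)

variable [Fintype κ] [DecidableEq K] {E : Finset K} {R : ℕ}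

theorem card_le_of_genericFrame_of_agree [Finite ι] {S : Finset (Matrix ι κ K)} {i : Fin 3 → ι}
    {j : Fin 3 → κ} (hE : ∀ A ∈ S, ∀ r c, A r c ∈ E) (hrank : ∀ A ∈ S, A.rank ≤ 2)
    (hS : ∀ A ∈ S, GenericFrame A i j) (hagree : ∀ A ∈ S, ∀ B ∈ S, ∀ r k, A r (j k) = B r (j k))
    (hR : ∀ u v : Fin 3 → K, (∀ k, u k ∈ E) → (∀ k, v k ∈ E) → GenericPair u v →
      #(orthogonalTriples E (u ⨯₃ v)) ≤ R) :
    #S ≤ R ^ (Fintype.card κ - 3) := by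
  classical
  cases nonempty_fintype ι
  rcases S.eq_empty_or_nonempty with rfl | ⟨A₀, hA₀⟩
  · exact zero_le
  let g (A : Matrix ι κ K) : κ → Fin 3 → K := fun c ↦ Aᵀ c ∘ i
  have hcol {A : Matrix ι κ K} (hA : A ∈ S) (k : Fin 3) : g A (j k) = g A₀ (j k) :=
    funext fun _ ↦ hagree A hA A₀ hA₀ _ k
  have hg : Set.InjOn g S := by
    intro A hA B hB hAB
    have hrow k : A (i k) = B (i k) := funext fun c ↦ congrFun (congrFun hAB c) k
    have hminor : A (i 0) (j 0) * A (i 1) (j 1) ≠ A (i 1) (j 0) * A (i 0) (j 1) := fun h ↦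
      (hS A hA).2 2 (sub_eq_zero.2 (h.trans (mul_comm _ _)))
    exact eq_of_rank_le_two (hrank A hA) (hrank B hB) hminor (hrow 0) (hrow 1)
      (fun r ↦ hagree A hA B hB r 0) fun r ↦ hagree A hA B hB r 1
  calc #S = #(S.image g) := (card_image_of_injOn hg).symm
    _ ≤ #(orthogonalTriples E (g A₀ (j 0) ⨯₃ g A₀ (j 1))) ^
          (Fintype.card κ - #(univ.image j)) := by
        refine card_le_pow_of_agree_on ?_ ?_ <;> simp only [forall_mem_image]
        · exact fun A hA B hB k _ ↦ (hcol hA k).trans (hcol hB k).symm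
        · intro A hA c _
          rw [← hcol hA, ← hcol hA]
          refine mem_orthogonalTriples.2 ⟨fun k ↦ hE A hA (i k) c, ?_⟩
          exact dotProduct_crossProduct_eq_zero_of_rank_le_two
            ((Matrix.rank_transpose A).trans_le (hrank A hA)) i c (j 0) (j 1)
    _ ≤ R ^ (Fintype.card κ - 3) := by
        rw [card_image_of_injective _ (hS A₀ hA₀).2.injective_of_comp, card_univ, Fintype.card_fin]
        exact Nat.pow_le_pow_left
          (hR _ _ (fun k ↦ hE A₀ hA₀ _ _) (fun k ↦ hE A₀ hA₀ _ _) (hS A₀ hA₀).1) _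

variable [Fintype ι]

theorem card_le_of_genericPair_of_orthogonal {S : Finset (ι → Fin 3 → K)} {r s : ι} (hrs : r ≠ s)
    (hE : ∀ B ∈ S, ∀ t k, B t k ∈ E) (hS : ∀ B ∈ S, GenericPair (B r) (B s))
    (horth : ∀ B ∈ S, ∀ t, B t ⬝ᵥ (B r ⨯₃ B s) = 0)
    (hR : ∀ u v : Fin 3 → K, (∀ k, u k ∈ E) → (∀ k, v k ∈ E) → GenericPair u v →
      #(orthogonalTriples E (u ⨯₃ v)) ≤ R) :
    #S ≤ R ^ (Fintype.card ι - 2) * #E ^ 6 := by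
  classical
  set V : Finset (Fin 3 → K) := Fintype.piFinset fun _ ↦ E
  calc #S ≤ R ^ (Fintype.card ι - 2) * #(V ×ˢ V) := by
        have hmaps : ∀ B ∈ S, (B r, B s) ∈ V ×ˢ V := fun B hB ↦
          mem_product.2 ⟨Fintype.mem_piFinset.2 (hE B hB r), Fintype.mem_piFinset.2 (hE B hB s)⟩
        refine card_le_mul_card_of_forall_fiber hmaps fun S' hS' hconst ↦ ?_
        rcases S'.eq_empty_or_nonempty with rfl | ⟨B₀, hB₀⟩
        · exact zero_le
        have hagree {B C : ι → Fin 3 → K} (hB : B ∈ S') (hC : C ∈ S') : B r = C r ∧ B s = C s :=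
          Prod.mk.inj (hconst B hB C hC)
        calc #S' ≤ #(orthogonalTriples E (B₀ r ⨯₃ B₀ s)) ^ (Fintype.card ι - #{r, s}) := by
              refine card_le_pow_of_agree_on (fun B hB C hC ↦ ?_) fun B hB t _ ↦ ?_
              · simpa only [forall_mem_insert, mem_singleton, forall_eq] using hagree hB hC
              · rw [← (hagree hB hB₀).1, ← (hagree hB hB₀).2]
                exact mem_orthogonalTriples.2 ⟨hE B (hS' hB) t, horth B (hS' hB) t⟩
          _ ≤ R ^ (Fintype.card ι - 2) := by
              rw [card_pair hrs]
              exact Nat.pow_le_pow_left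
                (hR _ _ (hE _ (hS' hB₀) r) (hE _ (hS' hB₀) s) (hS _ (hS' hB₀))) _
    _ = R ^ (Fintype.card ι - 2) * #E ^ 6 := by
        rw [card_product, Fintype.card_piFinset, prod_const, card_univ, Fintype.card_fin, ← pow_add]

theorem card_le_of_genericFrame {S : Finset (Matrix ι κ K)} {i : Fin 3 → ι} {j : Fin 3 → κ}
    (hE : ∀ A ∈ S, ∀ r c, A r c ∈ E) (hrank : ∀ A ∈ S, A.rank ≤ 2)
    (hS : ∀ A ∈ S, GenericFrame A i j)
    (hR : ∀ u v : Fin 3 → K, (∀ k, u k ∈ E) → (∀ k, v k ∈ E) → GenericPair u v →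
      #(orthogonalTriples E (u ⨯₃ v)) ≤ R) :
    #S ≤ R ^ (Fintype.card κ - 3) * (R ^ (Fintype.card ι - 2) * #E ^ 6) := by
  classical
  rcases S.eq_empty_or_nonempty with rfl | ⟨A₀, hA₀⟩
  · exact zero_le
  have hi : i 0 ≠ i 1 := (hS A₀ hA₀).1.injective_of_comp.ne zero_ne_one
  set T : Finset (ι → Fin 3 → K) := S.image fun A r ↦ A r ∘ j
  have hT : #T ≤ R ^ (Fintype.card ι - 2) * #E ^ 6 := by
    refine card_le_of_genericPair_of_orthogonal hi ?_ ?_ ?_ hR <;> simp only [T, forall_mem_image]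
    exacts [fun A hA r k ↦ hE A hA r (j k), fun A hA ↦ (hS A hA).2,
      fun A hA t ↦ dotProduct_crossProduct_eq_zero_of_rank_le_two (hrank A hA) j t _ _]
  refine le_trans ?_ (Nat.mul_le_mul_left _ hT)
  have hmaps : ∀ A ∈ S, (fun r ↦ A r ∘ j) ∈ T := fun A hA ↦ mem_image_of_mem _ hA
  exact card_le_mul_card_of_forall_fiber hmaps fun S' hS' hconst ↦
    card_le_of_genericFrame_of_agree (fun A hA ↦ hE A (hS' hA)) (fun A hA ↦ hrank A (hS' hA))
      (fun A hA ↦ hS A (hS' hA))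
      (fun A hA B hB r k ↦ congrFun (congrFun (hconst A hA B hB) r) k) hR

theorem card_le_of_exists_genericFrame {S : Finset (Matrix ι κ K)}
    (hE : ∀ A ∈ S, ∀ r c, A r c ∈ E) (hrank : ∀ A ∈ S, A.rank ≤ 2)
    (hS : ∀ A ∈ S, ∃ i j, GenericFrame A i j)
    (hR : ∀ u v : Fin 3 → K, (∀ k, u k ∈ E) → (∀ k, v k ∈ E) → GenericPair u v →
      #(orthogonalTriples E (u ⨯₃ v)) ≤ R) :
    #S ≤ Fintype.card ((Fin 3 → ι) × (Fin 3 → κ)) *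
      (R ^ (Fintype.card κ - 3) * (R ^ (Fintype.card ι - 2) * #E ^ 6)) :=
  card_le_card_mul_of_forall_exists (P := fun A ij ↦ GenericFrame A ij.1 ij.2)
    (fun A hA ↦ Prod.exists.2 (hS A hA)) fun _ hS' _ hij ↦
      card_le_of_genericFrame (fun A hA ↦ hE A (hS' hA)) (fun A hA ↦ hrank A (hS' hA)) hij hR

end GenericFrames

section RankTwoCount

open Finset
open scoped Matrix Combinatorics.Additive

variable {K ι κ : Type*} [Field K] [DecidableEq K] [Fintype ι] [Fintype κ]

theorem card_le_of_forall_rank_eq_two {E : Finset K} {R : ℕ} {S : Finset (Matrix ι κ K)}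
    (hι : 3 ≤ Fintype.card ι) (hκ : 3 ≤ Fintype.card κ) (h0 : 0 ∉ E)
    (hE : ∀ A ∈ S, ∀ r c, A r c ∈ E) (hrank : ∀ A ∈ S, A.rank = 2)
    (hR : ∀ u v : Fin 3 → K, (∀ k, u k ∈ E) → (∀ k, v k ∈ E) → GenericPair u v →
      #(orthogonalTriples E (u ⨯₃ v)) ≤ R) :
    #S ≤ Fintype.card ((Fin 3 → ι) × (Fin 3 → κ)) *
          (R ^ (Fintype.card κ - 3) * (R ^ (Fintype.card ι - 2) * #E ^ 6)) +
        Fintype.card (Fin 3 → ι) * ((2 * #E) ^ (Fintype.card ι - 3) *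
          (#E ^ Fintype.card κ * (#E ^ (Fintype.card κ - 2) * Eₘ[E]))) +
        Fintype.card (Fin 3 → κ) * ((2 * #E) ^ (Fintype.card κ - 3) *
          (#E ^ Fintype.card ι * (#E ^ (Fintype.card ι - 2) * Eₘ[E]))) := by
  classical
  have hcover : S ⊆ {A ∈ S | ∃ i j, GenericFrame A i j} ∪
      {A ∈ S | ∃ i : Fin 3 → ι, i.Injective ∧ RowsOnTwoLines A i} ∪
      {A ∈ S | ∃ j : Fin 3 → κ, j.Injective ∧ RowsOnTwoLines Aᵀ j} := by
    intro A hA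
    simp only [mem_union, mem_filter, hA, true_and, or_assoc]
    exact exists_genericFrame_or_rowsOnTwoLines hι hκ (fun r c h ↦ h0 (h ▸ hE A hA r c))
      (hrank A hA)
  refine (card_le_card hcover).trans ((card_union_le _ _).trans (Nat.add_le_add
    ((card_union_le _ _).trans (Nat.add_le_add ?_ ?_)) ?_))
  · exact card_le_of_exists_genericFrame (fun A hA ↦ hE A (mem_filter.1 hA).1)
      (fun A hA ↦ (hrank A (mem_filter.1 hA).1).le) (fun A hA ↦ (mem_filter.1 hA).2) hR
  · exact card_le_of_exists_rowsOnTwoLines (by omega) h0 (fun A hA ↦ hE A (mem_filter.1 hA).1)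
      fun A hA ↦ (mem_filter.1 hA).2
  · exact card_le_of_exists_rowsOnTwoLines_transpose (by omega) h0
      (fun A hA ↦ hE A (mem_filter.1 hA).1) fun A hA ↦ (mem_filter.1 hA).2

end RankTwoCount

section Asymptotics

open Asymptotics Filter Finset
open scoped Combinatorics.Additive

theorem rpow_isBigO_rpow {a b : ℝ} (hab : a ≤ b) :
    (fun H : ℝ ↦ H ^ a) =O[𝓟 (Set.Ici 1)] fun H ↦ H ^ b :=
  isBigO_principal.2 ⟨1, fun H (hH : 1 ≤ H) ↦ by
    rw [one_mul, Real.norm_of_nonneg (by positivity), Real.norm_of_nonneg (by positivity)]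
    exact Real.rpow_le_rpow_of_exponent_le hH hab⟩

theorem isBigO_mul_rpow {f g : ℝ → ℝ} {a b : ℝ} (hf : f =O[𝓟 (Set.Ici 1)] fun H ↦ H ^ a)
    (hg : g =O[𝓟 (Set.Ici 1)] fun H ↦ H ^ b) :
    (fun H ↦ f H * g H) =O[𝓟 (Set.Ici 1)] fun H ↦ H ^ (a + b) :=
  (hf.mul hg).congr' .rfl (eventually_principal.2 fun _ hH ↦
    (Real.rpow_add (zero_lt_one.trans_le hH) a b).symm)

theorem isBigO_pow_rpow {f : ℝ → ℝ} {a : ℝ} (hf : f =O[𝓟 (Set.Ici 1)] fun H ↦ H ^ a) (k : ℕ) :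
    (fun H ↦ f H ^ k) =O[𝓟 (Set.Ici 1)] fun H ↦ H ^ (k * a) :=
  (hf.pow k).congr' .rfl (eventually_principal.2 fun H (hH : 1 ≤ H) ↦ by
    beta_reduce
    rw [mul_comm, Real.rpow_mul_natCast (zero_le_one.trans hH)])

theorem natFloor_isBigO_rpow :
    (fun H : ℝ ↦ (⌊H⌋₊ : ℝ)) =O[𝓟 (Set.Ici 1)] fun H ↦ H ^ (1 : ℝ) :=
  isBigO_principal.2 ⟨1, fun H (hH : 1 ≤ H) ↦ by
    rw [one_mul, Real.rpow_one, Real.norm_natCast, Real.norm_of_nonneg (by positivity)]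
    exact Nat.floor_le (by positivity)⟩

theorem maxCardDivisors_comp_isBigO_rpow {N : ℝ → ℕ} {a δ : ℝ} (ha : 0 < a) (hδ : 0 < δ)
    (hN : (fun H ↦ (N H : ℝ)) =O[𝓟 (Set.Ici 1)] fun H ↦ H ^ a) :
    (fun H ↦ (maxCardDivisors (N H) : ℝ)) =O[𝓟 (Set.Ici 1)] fun H ↦ H ^ δ := by
  have hδa : 0 < δ / a := div_pos hδ ha
  have hcomp : (fun H ↦ (maxCardDivisors (N H) : ℝ)) =O[𝓟 (Set.Ici 1)]
      fun H ↦ (N H : ℝ) ^ (δ / a) :=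
    (maxCardDivisors_isBigO_rpow hδa).comp_tendsto tendsto_top
  have hnonneg : 0 ≤ᶠ[𝓟 (Set.Ici 1)] fun H : ℝ ↦ H ^ a :=
    eventually_principal.2 fun _ hH ↦ Real.rpow_nonneg (zero_le_one.trans hH) a
  refine (hcomp.trans (hN.rpow hδa.le hnonneg)).congr' .rfl (eventually_principal.2 fun H hH ↦ ?_)
  beta_reduce
  rw [← Real.rpow_mul (zero_le_one.trans hH), mul_div_cancel₀ _ ha.ne']

theorem card_egyptianFinset_isBigO :
    (fun H ↦ (#(egyptianFinset H) : ℝ)) =O[𝓟 (Set.Ici 1)] fun H ↦ H ^ (1 : ℝ) :=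
  isBigO_principal.2 ⟨3, fun H (hH : 1 ≤ H) ↦ by
    rw [Real.rpow_one, Real.norm_natCast, Real.norm_of_nonneg (by positivity)]
    calc (#(egyptianFinset H) : ℝ) ≤ 2 * ⌊H⌋₊ + 1 := mod_cast card_egyptianFinset_le H
      _ ≤ 3 * H := by linarith [Nat.floor_le (zero_le_one.trans hH)]⟩

theorem natCast_isBigO_of_le {α : Type*} {l : Filter α} {f g : α → ℕ} (h : ∀ x, f x ≤ g x) :
    (fun x ↦ (f x : ℝ)) =O[l] fun x ↦ (g x : ℝ) :=
  isBigO_of_le l fun x ↦ by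
    rw [Real.norm_natCast, Real.norm_natCast]
    exact mod_cast h x

theorem mulEnergy_egyptianFinset_isBigO {δ : ℝ} (hδ : 0 < δ) :
    (fun H ↦ (Eₘ[egyptianFinset H] : ℝ)) =O[𝓟 (Set.Ici 1)] fun H ↦ H ^ (δ + 2) := by
  refine (natCast_isBigO_of_le mulEnergy_egyptianFinset_le).trans ?_
  push_cast
  have hdiv : (fun H : ℝ ↦ (maxCardDivisors (⌊H⌋₊ ^ 2) : ℝ)) =O[𝓟 (Set.Ici 1)] fun H ↦ H ^ δ := by
    refine maxCardDivisors_comp_isBigO_rpow (a := 2) two_pos hδ ?_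
    push_cast
    exact (isBigO_pow_rpow natFloor_isBigO_rpow 2).trans (rpow_isBigO_rpow (by norm_num))
  exact (isBigO_mul_rpow (hdiv.const_mul_left 2)
    (isBigO_pow_rpow card_egyptianFinset_isBigO 2)).trans (rpow_isBigO_rpow (by norm_num))

theorem card_orthogonalTriples_bound_isBigO {δ : ℝ} (hδ : 0 < δ) :
    (fun H : ℝ ↦ ((2 * maxCardDivisors (⌊H⌋₊ ^ 2 * (2 * ⌊H⌋₊ ^ 4) ^ 2) *
      #(egyptianFinset H) : ℕ) : ℝ)) =O[𝓟 (Set.Ici 1)] fun H ↦ H ^ (δ + 1) := by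
  have hdiv : (fun H : ℝ ↦ (maxCardDivisors (⌊H⌋₊ ^ 2 * (2 * ⌊H⌋₊ ^ 4) ^ 2) : ℝ))
      =O[𝓟 (Set.Ici 1)] fun H ↦ H ^ δ := by
    refine maxCardDivisors_comp_isBigO_rpow (a := 10) (by norm_num) hδ ?_
    push_cast
    have hfour := (isBigO_pow_rpow natFloor_isBigO_rpow 4).const_mul_left 2
    exact (isBigO_mul_rpow (isBigO_pow_rpow natFloor_isBigO_rpow 2)
      (isBigO_pow_rpow hfour 2)).trans (rpow_isBigO_rpow (by norm_num))
  push_cast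
  exact isBigO_mul_rpow (hdiv.const_mul_left 2) card_egyptianFinset_isBigO

end Asymptotics

section Exponents

open Asymptotics Filter

variable {E R Q : ℝ → ℝ} {δ : ℝ} {m n : ℕ}

theorem genericFrame_bound_isBigO (hm : 3 ≤ m) (hn : 3 ≤ n) (hδ : 0 ≤ δ)
    (hE : E =O[𝓟 (Set.Ici 1)] fun H ↦ H ^ (1 : ℝ))
    (hR : R =O[𝓟 (Set.Ici 1)] fun H ↦ H ^ (δ + 1)) :
    (fun H ↦ R H ^ (n - 3) * (R H ^ (m - 2) * E H ^ 6)) =O[𝓟 (Set.Ici 1)]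
      fun H ↦ H ^ (m + n + 1 + (m + n) * δ) := by
  refine (isBigO_mul_rpow (isBigO_pow_rpow hR _)
    (isBigO_mul_rpow (isBigO_pow_rpow hR _) (isBigO_pow_rpow hE 6))).trans (rpow_isBigO_rpow ?_)
  rw [Nat.cast_sub hn, Nat.cast_sub (by omega : 2 ≤ m)]
  push_cast
  linarith

theorem twoLines_bound_isBigO (hm : 3 ≤ m) (hn : 2 ≤ n)
    (hE : E =O[𝓟 (Set.Ici 1)] fun H ↦ H ^ (1 : ℝ))
    (hQ : Q =O[𝓟 (Set.Ici 1)] fun H ↦ H ^ (δ + 2)) :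
    (fun H ↦ (2 * E H) ^ (m - 3) * (E H ^ n * (E H ^ (n - 2) * Q H))) =O[𝓟 (Set.Ici 1)]
      fun H ↦ H ^ (m + 2 * n - 3 + δ) := by
  refine (isBigO_mul_rpow (isBigO_pow_rpow (hE.const_mul_left 2) _)
    (isBigO_mul_rpow (isBigO_pow_rpow hE n)
      (isBigO_mul_rpow (isBigO_pow_rpow hE _) hQ))).trans (rpow_isBigO_rpow ?_)
  rw [Nat.cast_sub hm, Nat.cast_sub hn]
  push_cast
  linarith

end Exponents

section Egyptian

open Asymptotics Filter Finset
open scoped Matrix Combinatorics.Additive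

variable {ι κ : Type*} [Fintype ι] [Fintype κ]

theorem ncard_egyptian_rank_two_le (hι : 3 ≤ Fintype.card ι) (hκ : 3 ≤ Fintype.card κ) {H : ℝ}
    {R : ℕ} (hR : ∀ u v : Fin 3 → ℚ, (∀ k, u k ∈ Egyptian H) → (∀ k, v k ∈ Egyptian H) →
      GenericPair u v → #(orthogonalTriples (egyptianFinset H) (u ⨯₃ v)) ≤ R) :
    {A : Matrix ι κ ℚ | (∀ i j, A i j ∈ Egyptian H) ∧ A.rank = 2}.ncard ≤
        Fintype.card ((Fin 3 → ι) × (Fin 3 → κ)) * (R ^ (Fintype.card κ - 3) *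
          (R ^ (Fintype.card ι - 2) * #(egyptianFinset H) ^ 6)) +
        Fintype.card (Fin 3 → ι) * ((2 * #(egyptianFinset H)) ^ (Fintype.card ι - 3) *
          (#(egyptianFinset H) ^ Fintype.card κ *
            (#(egyptianFinset H) ^ (Fintype.card κ - 2) * Eₘ[egyptianFinset H]))) +
        Fintype.card (Fin 3 → κ) * ((2 * #(egyptianFinset H)) ^ (Fintype.card κ - 3) *
          (#(egyptianFinset H) ^ Fintype.card ι *
            (#(egyptianFinset H) ^ (Fintype.card ι - 2) * Eₘ[egyptianFinset H]))) := by
  have hfin : {A : Matrix ι κ ℚ | (∀ i j, A i j ∈ Egyptian H) ∧ A.rank = 2}.Finite :=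
    (Set.Finite.pi' fun _ ↦ Set.Finite.pi' fun _ ↦ Egyptian.finite H).subset fun _ hA ↦ hA.1
  rw [Set.ncard_eq_toFinset_card _ hfin]
  refine card_le_of_forall_rank_eq_two hι hκ ?_ ?_ ?_ ?_
  · exact fun h ↦ Egyptian.ne_zero (mem_egyptianFinset.1 h) rfl
  · exact fun A hA r c ↦ mem_egyptianFinset.2 ((hfin.mem_toFinset.1 hA).1 r c)
  · exact fun A hA ↦ (hfin.mem_toFinset.1 hA).2
  · simpa only [mem_egyptianFinset] using hR

theorem stmt9_general (hι : 3 ≤ Fintype.card ι) (hκ : 3 ≤ Fintype.card κ) {ε : ℝ} (hε : 0 < ε) :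
    ∃ C : ℝ, ∀ H : ℝ, H ≥ 1 →
      ({A : Matrix ι κ ℚ | (∀ i j, A i j ∈ Egyptian H) ∧ A.rank = 2}.ncard : ℝ) ≤
        C * H ^ ((Fintype.card ι + Fintype.card κ +
          max 4 (max (Fintype.card ι : ℝ) (Fintype.card κ)) - 3 : ℝ) + ε) := by
  set m := Fintype.card ι
  set n := Fintype.card κ
  set d : ℝ := m + n + max 4 (max (m : ℝ) n) - 3 + ε
  have hmn : (0 : ℝ) < m + n := by exact_mod_cast (by omega : 0 < m + n)
  have hδ : 0 < ε / (m + n) := div_pos hε hmn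
  have hδε : ε / (m + n) ≤ ε := div_le_self hε.le (by exact_mod_cast (by omega : 1 ≤ m + n))
  have h4 : (4 : ℝ) ≤ max 4 (max (m : ℝ) n) := le_max_left _ _
  have hm : (m : ℝ) ≤ max 4 (max (m : ℝ) n) := (le_max_left _ _).trans (le_max_right _ _)
  have hn : (n : ℝ) ≤ max 4 (max (m : ℝ) n) := (le_max_right _ _).trans (le_max_right _ _)
  have hE := card_egyptianFinset_isBigO
  have hR := card_orthogonalTriples_bound_isBigO hδ
  have hQ := mulEnergy_egyptianFinset_isBigO hδ
  have hgeneric := (genericFrame_bound_isBigO hι hκ hδ.le hE hR).trans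
    (rpow_isBigO_rpow (b := d) (by rw [mul_div_cancel₀ _ hmn.ne']; linarith))
  have hrows := (twoLines_bound_isBigO hι (by omega : 2 ≤ n) hE hQ).trans
    (rpow_isBigO_rpow (b := d) (by linarith))
  have hcols := (twoLines_bound_isBigO hκ (by omega : 2 ≤ m) hE hQ).trans
    (rpow_isBigO_rpow (b := d) (by linarith))
  have hbound := natCast_isBigO_of_le (l := 𝓟 (Set.Ici 1)) fun H ↦
    ncard_egyptian_rank_two_le hι hκ fun u v hu hv huv ↦
      card_orthogonalTriples_cross_le (H := H) hu hv huv
  obtain ⟨C, hC⟩ := isBigO_principal.1 (hbound.trans (by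
    push_cast at hR hgeneric ⊢
    exact ((hgeneric.const_mul_left _).add (hrows.const_mul_left _)).add (hcols.const_mul_left _)))
  refine ⟨C, fun H hH ↦ ?_⟩
  simpa only [Real.norm_natCast, Real.norm_of_nonneg
    (Real.rpow_nonneg (zero_le_one.trans hH) d)] using hC H hH

end Egyptian

theorem stmt9 (m n : ℕ) (hnm : n ≥ m) (hm : m > 2) :
    ∀ ε > (0 : ℝ), ∃ C : ℝ, ∀ H : ℝ, H ≥ 2 →
      ((m, n) = (3, 3) →
        (Set.ncard {A : Matrix (Fin m) (Fin n) ℚ |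
            (∀ i j, A i j ∈ Egyptian H) ∧ A.rank = 2} : ℝ) ≤
          C * H ^ ((7 : ℝ) + ε)) ∧
      ((m, n) ≠ (3, 3) →
        (Set.ncard {A : Matrix (Fin m) (Fin n) ℚ |
            (∀ i j, A i j ∈ Egyptian H) ∧ A.rank = 2} : ℝ) ≤
          C * H ^ ((2 * n + m : ℝ) - 3 + ε)) := by
  intro ε hε
  obtain ⟨C, hC⟩ := stmt9_general (ι := Fin m) (κ := Fin n) (by rwa [Fintype.card_fin])
    (by rw [Fintype.card_fin]; omega) hε
  simp only [Fintype.card_fin] at hC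
  refine ⟨C, fun H hH ↦ ⟨fun h ↦ ?_, fun h ↦ ?_⟩⟩
  · obtain ⟨rfl, rfl⟩ := Prod.mk.inj h
    convert hC H (by linarith) using 3
    norm_num
  · have hn : 4 ≤ n := by
      rw [ne_eq, Prod.mk.injEq] at h
      omega
    rw [max_eq_right (Nat.cast_le.2 hnm), max_eq_right (Nat.ofNat_le_cast.2 hn)] at hC
    convert hC H (by linarith) using 3
    ring
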